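/- arXiv:1408.4747 — 3 statements merged into one kernel-verified Lean document; each statement's English description precedes it below -/
import Mathlib

section
/- Let (ξ_n)_{n≥1} be any sequence of real numbers, let μ > 0 and h ∈ [0,∞), let (W_n)_{n≥0} be the DE-CuSum sequence started at 0 and (C_n)_{n≥0} the CuSum sequence started at 0, both driven by (ξ_n). Then C_n ≥ W_n for all n ≥ 0. -/
open MeasureTheory Filter Set ProbabilityTheory
open scoped ENNReal

/-- CuSum sequence started at `c`, driven by the sequence `ξ`
(`ξ n` is the `(n+1)`-th increment, so the sequence is indexed from 1 via `n ↦ ξ (n-1)`). -/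
def cusum (ξ : ℕ → ℝ) (c : ℝ) : ℕ → ℝ
  | 0 => c
  | n + 1 => max 0 (cusum ξ c n + ξ n)
/-- DE-CuSum sequence with parameters `μ > 0` and `h ∈ [0,∞)`, started at `w`:
`W_{n+1} = min (W_n + μ) 0` if `W_n < 0`, and `W_{n+1} = max (W_n + ξ_{n+1}) (-h)` if `W_n ≥ 0`. -/
noncomputable def deCusum (ξ : ℕ → ℝ) (μ h w : ℝ) : ℕ → ℝ
  | 0 => w
  | n + 1 =>
    if deCusum ξ μ h w n < 0 then min (deCusum ξ μ h w n + μ) 0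
    else max (deCusum ξ μ h w n + ξ n) (-h)

/-! Each CuSum step `x ↦ max 0 (x + ξ n)` is monotone, so the CuSum sequence dominates every
subsolution of its recursion. The DE-CuSum sequence is such a subsolution: below zero its next value
is capped at `0`, and at or above zero it moves like CuSum, except that its floor `-h` is at
most `0`. -/

theorem le_cusum_of_succ_le {ξ V : ℕ → ℝ} {c : ℝ} (h_zero : V 0 ≤ c)
    (h_succ : ∀ n, V (n + 1) ≤ max 0 (V n + ξ n)) (n : ℕ) : V n ≤ cusum ξ c n := by
  induction n with
  | zero => exact h_zero
  | succ n ih =>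
    calc
      V (n + 1) ≤ max 0 (V n + ξ n) := h_succ n
      _ ≤ max 0 (cusum ξ c n + ξ n) := by gcongr

theorem deCusum_succ_le_max (ξ : ℕ → ℝ) (μ w : ℝ) {h : ℝ} (hh : 0 ≤ h) (n : ℕ) :
    deCusum ξ μ h w (n + 1) ≤ max 0 (deCusum ξ μ h w n + ξ n) := by
  rw [deCusum]
  split_ifs
  · exact (min_le_right _ _).trans (le_max_left _ _)
  · rw [max_comm]
    exact max_le_max_right _ (neg_nonpos.mpr hh)

theorem cusum_ge_deCusum_general (ξ : ℕ → ℝ) (μ : ℝ) {h w c : ℝ} (hh : 0 ≤ h) (hwc : w ≤ c)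
    (n : ℕ) : deCusum ξ μ h w n ≤ cusum ξ c n :=
  le_cusum_of_succ_le hwc (deCusum_succ_le_max ξ μ w hh) n

/-- For any real sequence `ξ`, `μ > 0`, `h ∈ [0,∞)`, the CuSum sequence started at `0`
dominates the DE-CuSum sequence started at `0`: `C_n ≥ W_n` for all `n ≥ 0`. -/
theorem cusum_ge_deCusum (ξ : ℕ → ℝ) (μ h : ℝ) (hμ : 0 < μ) (hh : 0 ≤ h) :
    ∀ n : ℕ, deCusum ξ μ h 0 n ≤ cusum ξ 0 n :=
  cusum_ge_deCusum_general ξ μ hh le_rfl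
end

section
/- Let (ξ_n)_{n≥1} be any sequence of real numbers, let μ > 0, h ∈ [0,∞) and A ∈ ℝ. Let (W_n)_{n≥0} be the DE-CuSum sequence started at 0 and (C_n)_{n≥0} the CuSum sequence started at 0, both driven by (ξ_n), and define the hitting times τ_W = inf{n ≥ 1 : W_n > A} and τ_C = inf{n ≥ 1 : C_n > A} (with values in ℕ ∪ {∞} and inf ∅ = ∞). Then τ_C ≤ τ_W. In particular, for any probability measure under which (ξ_n) is a random sequence, E[τ_W] ≥ E[τ_C], so the false alarm rate of the DE-CuSum stopping time is at most that of the CuSum stopping time. -/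
open MeasureTheory Filter Set ProbabilityTheory
open scoped ENNReal

/-- First time `n ≥ 1` at which `P n` holds, valued in `ℕ∞` with `inf ∅ = ∞`. -/
noncomputable def firstTime (P : ℕ → Prop) : ℕ∞ :=
  sInf ((↑) '' {n : ℕ | 1 ≤ n ∧ P n})

lemma firstTime_anti {P Q : ℕ → Prop} (hPQ : ∀ n, 1 ≤ n → P n → Q n) :
    firstTime Q ≤ firstTime P :=
  sInf_le_sInf <| image_mono fun n ⟨hn, hP⟩ => ⟨hn, hPQ n hn hP⟩

lemma cusum_succ_nonneg (ξ : ℕ → ℝ) (c : ℝ) (n : ℕ) : 0 ≤ cusum ξ c (n + 1) :=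
  le_max_left _ _

section Comparison

variable (ξ : ℕ → ℝ) (μ : ℝ) {h w c : ℝ}

lemma deCusum_le_cusum (hh : 0 ≤ h) (hwc : w ≤ c) (n : ℕ) :
    deCusum ξ μ h w n ≤ cusum ξ c n := by
  induction n with
  | zero => exact hwc
  | succ n ih =>
    have cusum_nonneg := cusum_succ_nonneg ξ c n
    rw [deCusum]
    split_ifs
    · exact (min_le_right _ _).trans cusum_nonneg
    · have step_le : deCusum ξ μ h w n + ξ n ≤ cusum ξ c (n + 1) :=
        (add_le_add_left ih (ξ n)).trans (le_max_right _ _)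
      have floor_le : -h ≤ cusum ξ c (n + 1) := (neg_nonpos.mpr hh).trans cusum_nonneg
      exact max_le step_le floor_le

lemma firstTime_cusum_le_firstTime_deCusum (A : ℝ) (hh : 0 ≤ h) (hwc : w ≤ c) :
    firstTime (fun n => A < cusum ξ c n) ≤ firstTime (fun n => A < deCusum ξ μ h w n) :=
  firstTime_anti fun n _ hA => hA.trans_le (deCusum_le_cusum ξ μ hh hwc n)

end Comparison

theorem cusum_hit_le_deCusum_hit_general (ξ : ℕ → ℝ) (μ A : ℝ) {h w c : ℝ} (hh : 0 ≤ h)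
    (hwc : w ≤ c) :
    firstTime (fun n => A < cusum ξ c n) ≤ firstTime (fun n => A < deCusum ξ μ h w n) ∧
    ∀ (Ω : Type*) [MeasurableSpace Ω] (P : Measure Ω) (ζ : ℕ → Ω → ℝ),
      ∫⁻ ω, (firstTime (fun n => A < cusum (fun k => ζ k ω) c n) : ℝ≥0∞) ∂P ≤
        ∫⁻ ω, (firstTime (fun n => A < deCusum (fun k => ζ k ω) μ h w n) : ℝ≥0∞) ∂P :=
  ⟨firstTime_cusum_le_firstTime_deCusum ξ μ A hh hwc, fun _ _ _ ζ =>
    lintegral_mono fun ω => ENat.toENNReal_mono <|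
      firstTime_cusum_le_firstTime_deCusum (fun k => ζ k ω) μ A hh hwc⟩

/-- The CuSum hitting time of level `A` is at most the DE-CuSum hitting time of `A`
(both started at 0); in particular, for any probability measure generating the sequence,
`E[τ_W] ≥ E[τ_C]`, so the false alarm rate of DE-CuSum is at most that of CuSum. -/
theorem cusum_hit_le_deCusum_hit (ξ : ℕ → ℝ) (μ h A : ℝ) (hμ : 0 < μ) (hh : 0 ≤ h) :
    firstTime (fun n => A < cusum ξ 0 n) ≤ firstTime (fun n => A < deCusum ξ μ h 0 n) ∧
    ∀ (Ω : Type) (_ : MeasurableSpace Ω) (P : Measure Ω), IsProbabilityMeasure P →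
      ∀ ζ : ℕ → Ω → ℝ,
        ∫⁻ ω, (firstTime (fun n => A < cusum (fun k => ζ k ω) 0 n) : ℝ≥0∞) ∂P ≤
          ∫⁻ ω, (firstTime (fun n => A < deCusum (fun k => ζ k ω) μ h 0 n) : ℝ≥0∞) ∂P := by
  obtain ⟨hit_le, mean_le⟩ := cusum_hit_le_deCusum_hit_general ξ μ A hh (le_refl (0 : ℝ))
  exact ⟨hit_le, fun Ω _ P _ ζ => mean_le Ω P ζ⟩
end

section
/- Let (ξ_n)_{n≥1} be any sequence of real numbers, let μ > 0 and h ∈ [0,∞), and let (W_n)_{n≥0} be the DE-CuSum sequence started at w ∈ [−h, ∞). Then: (i) W_n ≥ −h for all n ≥ 0; (ii) whenever W_n < 0, setting m = ⌈−W_n/μ⌉ one has W_{n+j} < 0 for all 0 ≤ j < m and W_{n+m} = 0, and m ≤ ⌈h/μ⌉. Consequently the number of consecutive indices at which the DE-CuSum statistic is negative (i.e., consecutive skipped samples) never exceeds ⌈h/μ⌉. -/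
open MeasureTheory Filter Set ProbabilityTheory
open scoped ENNReal

/-!
From a value `W n ≤ 0`, the statistic follows `W (n + j) = min (W n + j * μ) 0` for all
`j ≤ ⌈-W n / μ⌉`, and `j < ⌈-W n / μ⌉` says exactly that `W n + j * μ < 0`. Hence it is negative
before step `⌈-W n / μ⌉` and zero at that step, and the lower bound `-h ≤ W n` bounds the number
of steps.
-/

theorem lt_ceil_neg_div_iff {R : Type*} [Field R] [LinearOrder R] [IsStrictOrderedRing R]
    [FloorSemiring R] {x μ : R} (hμ : 0 < μ) {j : ℕ} : j < ⌈-x / μ⌉₊ ↔ x + j * μ < 0 := by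
  rw [Nat.lt_ceil, lt_div_iff₀ hμ, lt_neg_iff_add_neg']

section DeCusum

variable {ξ : ℕ → ℝ} {μ h w : ℝ} {n j : ℕ}

theorem deCusum_succ_of_neg (hn : deCusum ξ μ h w n < 0) :
    deCusum ξ μ h w (n + 1) = min (deCusum ξ μ h w n + μ) 0 :=
  if_pos hn

theorem deCusum_succ_of_nonneg (hn : 0 ≤ deCusum ξ μ h w n) :
    deCusum ξ μ h w (n + 1) = max (deCusum ξ μ h w n + ξ n) (-h) :=
  if_neg hn.not_gt

theorem neg_le_deCusum (hμ : 0 ≤ μ) (hw : -h ≤ w) (n : ℕ) : -h ≤ deCusum ξ μ h w n := by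
  induction n with
  | zero => exact hw
  | succ n ih =>
    rcases lt_or_ge (deCusum ξ μ h w n) 0 with hneg | hnonneg
    · rw [deCusum_succ_of_neg hneg]
      exact le_min (le_add_of_le_of_nonneg ih hμ) (ih.trans hneg.le)
    · rw [deCusum_succ_of_nonneg hnonneg]
      exact le_max_right _ _

theorem deCusum_add_eq_min (hμ : 0 < μ) (hn : deCusum ξ μ h w n ≤ 0)
    (hj : j ≤ ⌈-deCusum ξ μ h w n / μ⌉₊) :
    deCusum ξ μ h w (n + j) = min (deCusum ξ μ h w n + j * μ) 0 := by
  induction j with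
  | zero => simp [hn]
  | succ j ih =>
    have hneg : deCusum ξ μ h w n + j * μ < 0 := (lt_ceil_neg_div_iff hμ).1 hj
    have hclimb : deCusum ξ μ h w (n + j) = deCusum ξ μ h w n + j * μ :=
      (ih (Nat.le_of_succ_le hj)).trans (min_eq_left hneg.le)
    calc deCusum ξ μ h w (n + j + 1)
        = min (deCusum ξ μ h w (n + j) + μ) 0 := deCusum_succ_of_neg (hclimb.trans_lt hneg)
      _ = min (deCusum ξ μ h w n + (j + 1 : ℕ) * μ) 0 := by
        rw [hclimb, add_assoc, Nat.cast_succ, add_one_mul]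

theorem deCusum_add_neg_of_lt_ceil (hμ : 0 < μ) (hj : j < ⌈-deCusum ξ μ h w n / μ⌉₊) :
    deCusum ξ μ h w (n + j) < 0 := by
  have hn : deCusum ξ μ h w n < 0 := by
    simpa using (lt_ceil_neg_div_iff hμ).1 (Nat.zero_lt_of_lt hj)
  rw [deCusum_add_eq_min hμ hn.le hj.le]
  exact min_lt_of_left_lt ((lt_ceil_neg_div_iff hμ).1 hj)

theorem deCusum_add_ceil_eq_zero (hμ : 0 < μ) (hn : deCusum ξ μ h w n ≤ 0) :
    deCusum ξ μ h w (n + ⌈-deCusum ξ μ h w n / μ⌉₊) = 0 := by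
  rw [deCusum_add_eq_min hμ hn le_rfl]
  exact min_eq_right (not_lt.1 fun hneg => lt_irrefl _ ((lt_ceil_neg_div_iff hμ).2 hneg))

theorem ceil_neg_deCusum_div_le (hμ : 0 < μ) (hw : -h ≤ w) (n : ℕ) :
    ⌈-deCusum ξ μ h w n / μ⌉₊ ≤ ⌈h / μ⌉₊ :=
  Nat.ceil_mono (div_le_div_of_nonneg_right (neg_le.1 (neg_le_deCusum hμ.le hw n)) hμ.le)

end DeCusum

/-- The DE-CuSum statistic started at `w ∈ [-h, ∞)` stays in `[-h, ∞)`; moreover, whenever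
`W_n < 0`, with `m = ⌈-W_n/μ⌉` one has `W_{n+j} < 0` for `0 ≤ j < m`, `W_{n+m} = 0`, and
`m ≤ ⌈h/μ⌉`: the number of consecutive skipped samples never exceeds `⌈h/μ⌉`. -/
theorem deCusum_skip_bound (ξ : ℕ → ℝ) (μ h w : ℝ) (hμ : 0 < μ) (hh : 0 ≤ h) (hw : -h ≤ w) :
    (∀ n : ℕ, -h ≤ deCusum ξ μ h w n) ∧
    ∀ n : ℕ, deCusum ξ μ h w n < 0 →
      (∀ j : ℕ, j < ⌈-deCusum ξ μ h w n / μ⌉₊ → deCusum ξ μ h w (n + j) < 0) ∧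
      deCusum ξ μ h w (n + ⌈-deCusum ξ μ h w n / μ⌉₊) = 0 ∧
      ⌈-deCusum ξ μ h w n / μ⌉₊ ≤ ⌈h / μ⌉₊ :=
  ⟨neg_le_deCusum hμ.le hw, fun n hn =>
    ⟨fun _ => deCusum_add_neg_of_lt_ceil hμ, deCusum_add_ceil_eq_zero hμ hn.le,
      ceil_neg_deCusum_div_le hμ hw n⟩⟩
end
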